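/- If X is an arc and p ∈ X, then (X,p) has unique hyperspace C(p,X) in the class 𝒯 of trees; that is, for every tree Y and q ∈ Y such that C(p,X) is homeomorphic to C(q,Y), there is a homeomorphism 𝔥 : X → Y with 𝔥(p) = q. -/

import Mathlib

open Set Topology TopologicalSpace

universe u

/-- `IndDimLE m α t` means that the small inductive dimension of `α` is at most `m - 1`.
In particular `IndDimLE 0 α t` means `α` is empty (dimension `-1`). -/
def IndDimLE : ℕ → (α : Type u) → TopologicalSpace α → Prop
  | 0, α, _ => IsEmpty α
  | n + 1, α, t =>
      ∀ (x : α) (U : Set α), @IsOpen α t U → x ∈ U →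
        ∃ V : Set α, @IsOpen α t V ∧ x ∈ V ∧ V ⊆ U ∧
          IndDimLE n (↥(@frontier α t V))
            (TopologicalSpace.induced (Subtype.val : ↥(@frontier α t V) → α) t)

/-- The small inductive dimension of a topological space, as an integer
(with junk value if the dimension is infinite). -/
noncomputable def indDim (α : Type u) [t : TopologicalSpace α] : ℤ :=
  sInf {d : ℤ | ∃ m : ℕ, d = (m : ℤ) - 1 ∧ IndDimLE m α t}

section Defs

variable {X : Type u} [TopologicalSpace X]

/-- `A` is an arc, i.e. homeomorphic to `[0,1]`. -/
def IsArcSet (A : Set X) : Prop :=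
  Nonempty (↥A ≃ₜ ↥(Icc (0 : ℝ) 1))

/-- `A` is an arc with end points `a` and `b`. -/
def IsArcFromTo (A : Set X) (a b : X) : Prop :=
  ∃ h : ↥(Icc (0 : ℝ) 1) ≃ₜ ↥A,
    ((h ⟨0, by norm_num⟩ : ↥A) : X) = a ∧ ((h ⟨1, by norm_num⟩ : ↥A) : X) = b

/-- `a` is an end point of the arc `A`. -/
def IsArcEndpoint (A : Set X) (a : X) : Prop := ∃ b, IsArcFromTo A a b

/-- The points of the arc `A` which are not end points of `A`. -/
def arcInterior (A : Set X) : Set X := {x ∈ A | ¬ IsArcEndpoint A x}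

/-- `N` is a simple `n`-od with vertex `v`: the union of `n` arcs emanating from `v`
and otherwise disjoint from each other. -/
def IsSimpleNod (n : ℕ) (N : Set X) (v : X) : Prop :=
  0 < n ∧ ∃ A : Fin n → Set X, (∀ i, IsArcSet (A i)) ∧ (⋃ i, A i) = N ∧
    (∀ i, IsArcEndpoint (A i) v) ∧ ∀ i j, i ≠ j → A i ∩ A j = {v}

/-- `x` has order `n` in the subspace `S`: `x` has a closed neighborhood in `S`
which is a simple `n`-od having `x` as the vertex. -/
def HasOrdIn (S : Set X) (x : X) (n : ℕ) : Prop :=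
  ∃ N : Set X, N ⊆ S ∧ IsClosed N ∧ (∃ U : Set X, IsOpen U ∧ x ∈ U ∧ U ∩ S ⊆ N) ∧
    IsSimpleNod n N x

/-- The order of `x` in the subspace `S`. -/
noncomputable def ordIn (S : Set X) (x : X) : ℕ := sInf {n | HasOrdIn S x n}

/-- End points (order `1`) of the subspace `S`. -/
def endPtsIn (S : Set X) : Set X := {x ∈ S | HasOrdIn S x 1}

/-- Ordinary points (order `2`) of the subspace `S`. -/
def ordinaryIn (S : Set X) : Set X := {x ∈ S | HasOrdIn S x 2}

/-- Ramification points (order `≥ 3`) of the subspace `S`. -/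
def ramifIn (S : Set X) : Set X := {x ∈ S | ∃ n, 3 ≤ n ∧ HasOrdIn S x n}

/-- Vertices (points of order `≠ 2`) of the subspace `S`. -/
def verticesIn (S : Set X) : Set X := {x ∈ S | ¬ HasOrdIn S x 2}

/-- `e` is an edge of the subspace `S`: an arc joining two vertices of `S` and
containing no more than two vertices of `S`. -/
def IsEdgeIn (S : Set X) (e : Set X) : Prop :=
  e ⊆ S ∧ ∃ a b, a ∈ verticesIn S ∧ b ∈ verticesIn S ∧ IsArcFromTo e a b ∧
    e ∩ verticesIn S ⊆ {a, b}

/-- `S` is a simple closed curve. -/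
def IsSimpleClosedCurve (S : Set X) : Prop := Nonempty (↥S ≃ₜ Circle)

end Defs

/-- `X` is an arc (as a space). -/
def IsArcSpace (X : Type u) [TopologicalSpace X] : Prop :=
  Nonempty (X ≃ₜ ↥(Icc (0 : ℝ) 1))

/-- `X` is a finite graph: a continuum which is the union of finitely many arcs, any two
of which are either disjoint or intersect only in one or both of their end points. -/
def IsFiniteGraph (X : Type u) [MetricSpace X] : Prop :=
  CompactSpace X ∧ ConnectedSpace X ∧ Nonempty X ∧
    ∃ 𝒜 : Finset (Set X), (∀ A ∈ 𝒜, IsArcSet A) ∧ ⋃₀ (𝒜 : Set (Set X)) = univ ∧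
      ∀ A ∈ 𝒜, ∀ B ∈ 𝒜, A ≠ B → ∀ x ∈ A ∩ B, IsArcEndpoint A x ∧ IsArcEndpoint B x

/-- `X` is a tree: a finite graph without simple closed curves. -/
def IsTree (X : Type u) [MetricSpace X] : Prop :=
  IsFiniteGraph X ∧ ∀ S : Set X, ¬ IsSimpleClosedCurve S

/-- `X` is neither an arc nor a simple `n`-od. -/
def NotArcNotNod (X : Type u) [MetricSpace X] : Prop :=
  ¬ IsArcSpace X ∧ ∀ (n : ℕ) (v : X), ¬ IsSimpleNod n (univ : Set X) v

/-- `T(X)`: the union of all edges of `X` disjoint from the set of end points of `X`. -/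
def Tpart (X : Type u) [MetricSpace X] : Set X :=
  ⋃₀ {e : Set X | IsEdgeIn (univ : Set X) e ∧ e ∩ endPtsIn (univ : Set X) = ∅}

/-- `Sub_p(T(X))`: subtrees of `T(X)` containing `p` (subcontinua of `T(X)` all of whose
edges are edges of `X`). -/
def SubTreesP (X : Type u) [MetricSpace X] (p : X) : Set (Set X) :=
  {Y | Y ⊆ Tpart X ∧ p ∈ Y ∧ IsCompact Y ∧ IsConnected Y ∧
    ∀ e : Set X, IsEdgeIn Y e → IsEdgeIn (univ : Set X) e}

/-- Subtrees of the tree `X`. -/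
def Subtrees (X : Type u) [MetricSpace X] : Set (Set X) :=
  {Y | IsCompact Y ∧ IsConnected Y ∧
    ∀ e : Set X, IsEdgeIn Y e → IsEdgeIn (univ : Set X) e}

/-- The smallest subtree of `X` containing `a` and `b`. -/
def treeHull (X : Type u) [MetricSpace X] (a b : X) : Set X :=
  ⋂₀ {Y | Y ∈ Subtrees X ∧ a ∈ Y ∧ b ∈ Y}

/-- The hyperspace `C(p,X)` of subcontinua of `X` containing `p`,
with the Hausdorff metric. -/
def CP (X : Type u) [MetricSpace X] (p : X) : Type u :=
  {A : NonemptyCompacts X // IsConnected (A : Set X) ∧ p ∈ (A : Set X)}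

noncomputable instance (X : Type u) [MetricSpace X] (p : X) : MetricSpace (CP X p) :=
  inferInstanceAs (MetricSpace
    {A : NonemptyCompacts X // IsConnected (A : Set X) ∧ p ∈ (A : Set X)})

/-- The underlying subset of `X` of an element of `C(p,X)`. -/
def CP.set {X : Type u} [MetricSpace X] {p : X} (A : CP X p) : Set X := (A.1 : Set X)

/-- `U_n(X)`: elements of `C(p,X)` having a neighborhood in `C(p,X)` homeomorphic to
the `n`-cell `[0,1]^n`. -/
def Un (X : Type u) [MetricSpace X] (p : X) (n : ℕ) : Set (CP X p) :=
  {A | ∃ N : Set (CP X p), N ∈ 𝓝 A ∧ Nonempty (↥N ≃ₜ (Fin n → ↥(Icc (0 : ℝ) 1)))}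

/-- `𝒰(X) = ⋃ₙ U_n(X)`. -/
def UnionUn (X : Type u) [MetricSpace X] (p : X) : Set (CP X p) := ⋃ n : ℕ, Un X p n

/-- The edges of `X` which are not edges of `Y` and intersect `Y`. -/
def incidentE (X : Type u) [MetricSpace X] (Y : Set X) : Set (Set X) :=
  {e | IsEdgeIn (univ : Set X) e ∧ ¬ IsEdgeIn Y e ∧ (e ∩ Y).Nonempty}

/-- `U_Y`: elements of `C(p,X)` of the form `Y` together with exactly one interior point
of each edge of `X` incident on `Y`. -/
def UofY (X : Type u) [MetricSpace X] (p : X) (Y : Set X) : Set (CP X p) :=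
  {B | ∃ f : ↥(incidentE X Y) → X,
    (∀ e : ↥(incidentE X Y), f e ∈ arcInterior (e : Set X)) ∧ B.set = Y ∪ range f}

/-- `(X,p)` has unique hyperspace `C(p,X)` in the class of trees. -/
def UniqueHyperspaceInTrees (X : Type u) [MetricSpace X] (p : X) : Prop :=
  ∀ (Y : Type u) [MetricSpace Y], IsTree Y → ∀ q : Y,
    Nonempty (CP X p ≃ₜ CP Y q) → ∃ 𝔥 : X ≃ₜ Y, 𝔥 p = q

/-!
If `p` is the vertex of a simple `n`-od `X`, a subcontinuum of `X` containing `p` consists of an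
initial segment of each leg, so `C(p,X)` is an `n`-cell. An arc is a simple 1-od or 2-od at each of
its points, hence `C(p,X)` is an `n`-cell with `n ≤ 2`, and it suffices to show that a tree `Y` for
which `C(q,Y)` is an `n`-cell is a simple `n`-od with vertex `q`.

Let `B` be a maximal arc containing `q` among the unions of arcs of `Y`; it is a simple `m`-od with
vertex `q`, where `m ≤ 2`. As `Y` contains no simple closed curve, any other arc of `Y` meeting `B`
is attached to it at a single interior point of `B`. If there is such an arc, then the legs of `B`
and this arc give an `(m + 1)`-cell in `C(q,Y)`, so `m + 1 ≤ n ≤ 2` by invariance of dimension.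
Hence `m = 1`, and `q` is an end point of `B`, near which `Y` coincides with `B`; so a neighborhood
of `{q}` in `C(q,Y)` embeds in an interval, which contradicts `n = 2`. Therefore `B = Y`, and the
same count gives `m = n`.
-/

section Dimension

theorem exists_continuousMap_exp_eq {A : Type*} [TopologicalSpace A] [SimplyConnectedSpace A]
    [LocallyPathConnectedSpace A] (g : C(A, ℂ)) (hg : ∀ a, g a ≠ 0) :
    ∃ L : C(A, ℂ), ∀ a, Complex.exp (L a) = g a := by
  obtain ⟨a₀⟩ : Nonempty A := inferInstance
  obtain ⟨L, ⟨-, hL⟩, -⟩ := Complex.isCoveringMapOn_exp.existsUnique_continuousMap_lifts g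
    (Complex.exp_log (hg a₀)) hg
  exact ⟨L, congrFun hL⟩

/-- An odd map from the circle to `ℂ \ {0}` has odd degree: a logarithm `L` would satisfy
`L (-z) - L z = c` with `exp c = -1`, while exchanging `z` and `-z` gives `c = -c`. -/
theorem exists_eq_zero_of_odd_on_sphere {g : ℂ → ℂ} (hg : Continuous g)
    (hodd : ∀ z ∈ Metric.sphere (0 : ℂ) 1, g (-z) = -g z) : ∃ z, g z = 0 := by
  by_contra! hne
  obtain ⟨L, hL⟩ := exists_continuousMap_exp_eq ⟨g, hg⟩ hne
  have : ConnectedSpace (Metric.sphere (0 : ℂ) 1) := isConnected_iff_connectedSpace.1 <|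
    isConnected_sphere (by simp [Complex.rank_real_complex]) 0 zero_le_one
  let D : Metric.sphere (0 : ℂ) 1 → ℂ := fun z => L (-z) - L z
  have hexp (z : Metric.sphere (0 : ℂ) 1) : Complex.exp (D z) = -1 := by
    rw [Complex.exp_sub, hL, hL, ContinuousMap.coe_mk, hodd z z.2, neg_div, div_self (hne z)]
  have hconst : D 1 = D (-1) := Complex.isCoveringMap_exp.const_of_comp (by fun_prop)
    (fun z w => Subtype.ext ((hexp z).trans (hexp w).symm)) 1 (-1)
  have hzero : D 1 = 0 := by
    have hneg : D (-1) = -D 1 := by simp [D]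
    linear_combination (1 / 2) * (hconst + hneg)
  have hone := hexp 1
  rw [hzero, Complex.exp_zero] at hone
  norm_num at hone

theorem exists_ne_zero_map_eq_map_neg_of_complex_prod_real {F : ℂ × ℝ → ℂ} (hF : Continuous F) :
    ∃ x ≠ 0, F x = F (-x) := by
  obtain ⟨z, hz⟩ := exists_eq_zero_of_odd_on_sphere
    (g := fun z => F (z, 1 - ‖z‖ ^ 2) - F (-(z, 1 - ‖z‖ ^ 2))) (by fun_prop) fun z hz => by
      simp [mem_sphere_zero_iff_norm.1 hz]
  refine ⟨_, fun h => ?_, sub_eq_zero.1 hz⟩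
  obtain ⟨rfl, h⟩ := Prod.mk_eq_zero.1 h
  simp at h

theorem exists_ne_zero_map_eq_map_neg_of_one_lt_rank {E : Type*} [AddCommGroup E] [Module ℝ E]
    [TopologicalSpace E] [ContinuousAdd E] [ContinuousSMul ℝ E] (hE : 1 < Module.rank ℝ E)
    {F : E → ℝ} (hF : Continuous F) : ∃ x ≠ 0, F x = F (-x) := by
  have : ContinuousNeg E := ContinuousNeg.of_continuousConstSMul ℝ E
  have : Nontrivial E := rank_pos_iff_nontrivial.1 (zero_lt_one.trans hE)
  obtain ⟨x, hx⟩ := exists_ne (0 : E)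
  have hconn := (isConnected_compl_singleton_of_one_lt_rank hE 0).isPreconnected
  have hFneg : Continuous fun y => F (-y) := by fun_prop
  rcases le_total (F x) (F (-x)) with h | h
  · exact hconn.intermediate_value₂ hx (neg_ne_zero.2 hx) hF.continuousOn hFneg.continuousOn h
      (by rwa [neg_neg])
  · exact hconn.intermediate_value₂ (neg_ne_zero.2 hx) hx hF.continuousOn hFneg.continuousOn
      (by rwa [neg_neg]) h

/-- The Borsuk–Ulam theorem for targets of dimension at most two. -/
theorem exists_ne_zero_map_eq_map_neg {E V : Type*} [NormedAddCommGroup E] [NormedSpace ℝ E]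
    [FiniteDimensional ℝ E] [NormedAddCommGroup V] [NormedSpace ℝ V] [FiniteDimensional ℝ V]
    (hV : Module.finrank ℝ V ≤ 2) (hEV : Module.finrank ℝ V < Module.finrank ℝ E)
    {F : E → V} (hF : Continuous F) : ∃ x ≠ 0, F x = F (-x) := by
  obtain h | h | h : Module.finrank ℝ V = 0 ∨ Module.finrank ℝ V = 1 ∨ Module.finrank ℝ V = 2 := by
    omega
  · have : Subsingleton V := Module.finrank_zero_iff.1 h
    have : Nontrivial E := Module.finrank_pos_iff.1 (h ▸ hEV)
    obtain ⟨x, hx⟩ := exists_ne (0 : E)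
    exact ⟨x, hx, Subsingleton.elim _ _⟩
  · obtain ⟨j, hj⟩ := finrank_le_iff_exists_linearMap.1 (h.trans_le (Module.finrank_self ℝ).ge)
    have := j.continuous_of_finiteDimensional
    obtain ⟨x, hx, hjx⟩ := exists_ne_zero_map_eq_map_neg_of_one_lt_rank
      (Module.lt_rank_of_lt_finrank (by simpa [h] using hEV)) (F := j ∘ F) (by fun_prop)
    exact ⟨x, hx, hj hjx⟩
  · obtain ⟨i, hi⟩ := finrank_le_iff_exists_linearMap.1
      (show Module.finrank ℝ (ℂ × ℝ) ≤ Module.finrank ℝ E by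
        rwa [Module.finrank_prod, Complex.finrank_real_complex, Module.finrank_self, ← h])
    obtain ⟨j, hj⟩ := finrank_le_iff_exists_linearMap.1
      (h.trans_le Complex.finrank_real_complex.ge)
    have := i.continuous_of_finiteDimensional
    have := j.continuous_of_finiteDimensional
    obtain ⟨x, hx, hjx⟩ := exists_ne_zero_map_eq_map_neg_of_complex_prod_real
      (F := j ∘ F ∘ i) (by fun_prop)
    refine ⟨i x, (map_ne_zero_iff i hi).2 hx, hj ?_⟩
    simpa only [Function.comp_apply, map_neg] using hjx

theorem card_le_card_of_injective_cube {ι κ : Type*} [Fintype ι] [Fintype κ]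
    (hκ : Fintype.card κ ≤ 2) {f : (ι → unitInterval) → κ → unitInterval} (hf : Continuous f)
    (hinj : f.Injective) : Fintype.card ι ≤ Fintype.card κ := by
  by_contra! hlt
  let F : (ι → ℝ) → κ → ℝ := fun x k => f (fun i => unitInterval.sigmoid (x i)) k
  have := unitInterval.continuous_sigmoid
  obtain ⟨x, hx, h⟩ := exists_ne_zero_map_eq_map_neg (F := F) (by simpa) (by simpa)
    (by fun_prop)
  refine hx (self_eq_neg.1 (funext fun i => unitInterval.sigmoid_injective ?_))
  exact congrFun (hinj (funext fun k => Subtype.ext (congrFun h k))) i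

theorem exists_injective_forall_mem_of_isOpen_cube {ι : Type*} {W : Set (ι → unitInterval)}
    (hW : IsOpen W) (hne : W.Nonempty) : ∃ g : (ι → unitInterval) → ι → unitInterval,
      Continuous g ∧ g.Injective ∧ ∀ y, g y ∈ W := by
  obtain ⟨x, hx⟩ := hne
  let g (δ : unitInterval) (y : ι → unitInterval) (i : ι) := Icc.convexComb (x i) (y i) δ
  have hg : Continuous fun z : unitInterval × (ι → unitInterval) => g z.1 z.2 :=
    continuous_pi fun i => Icc.continuous_convexComb_prod.comp
      (f := fun z : unitInterval × (ι → unitInterval) => (x i, z.2 i, z.1)) (by fun_prop)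
  have hsmall : ∀ᶠ δ in 𝓝[>] 0, ∀ y, g δ y ∈ W := by
    have := isCompact_univ.eventually_forall_of_forall_eventually (x₀ := (0 : unitInterval))
      (P := fun δ y => g δ y ∈ W) fun y _ => hg.continuousAt.eventually_mem
        (hW.mem_nhds (by simpa [g] using hx))
    simpa using this.filter_mono nhdsWithin_le_nhds
  have : (𝓝[>] (0 : unitInterval)).NeBot := nhdsGT_neBot_of_exists_gt ⟨1, zero_lt_one⟩
  obtain ⟨δ, hδW, hδ⟩ := (hsmall.and self_mem_nhdsWithin).exists
  refine ⟨g δ, by fun_prop, fun y z hyz => funext fun i => ?_, hδW⟩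
  have hi : (1 - δ : ℝ) * x i + δ * y i = (1 - δ) * x i + δ * z i :=
    congrArg Subtype.val (congrFun hyz i)
  exact Subtype.ext (mul_left_cancel₀ (unitInterval.coe_ne_zero.2 hδ.ne') (add_left_cancel hi))

end Dimension

theorem exists_homeomorph_of_isQuotientMap {X Y Z : Type*} [TopologicalSpace X]
    [TopologicalSpace Y] [TopologicalSpace Z] {f : Z → X} {g : Z → Y} (hf : IsQuotientMap f)
    (hg : IsQuotientMap g) (hfg : ∀ a b, f a = f b ↔ g a = g b) :
    ∃ e : X ≃ₜ Y, ∀ z, e (f z) = g z := by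
  have hf' : IsQuotientMap (⟨f, hf.continuous⟩ : C(Z, X)) := hf
  have hg' : IsQuotientMap (⟨g, hg.continuous⟩ : C(Z, Y)) := hg
  refine ⟨hf'.homeomorph.symm.trans ((Homeomorph.Quotient.congrRight hfg).trans hg'.homeomorph),
    fun z => ?_⟩
  have hz : hf'.homeomorph.symm (f z) = Quotient.mk _ z := hf'.homeomorph.symm_apply_eq.2 rfl
  rw [Homeomorph.trans_apply, hz]
  rfl

section Arcs

variable {Y : Type u} [TopologicalSpace Y]

theorem injective_convexComb {a b : ℝ} {x y : Icc a b} (hxy : x ≠ y) :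
    (Icc.convexComb x y).Injective := by
  intro s t hst
  have h : (1 - s : ℝ) * x + s * y = (1 - t) * x + t * y := congrArg Subtype.val hst
  refine Subtype.ext (mul_right_cancel₀ (sub_ne_zero.2 (Subtype.coe_ne_coe.2 hxy)) ?_)
  linear_combination -h

section Paths

variable {a b c : Y}

theorem injective_path_subpath {γ : Path a b} (hγ : Function.Injective γ) {s t : unitInterval}
    (hst : s ≠ t) : Function.Injective (γ.subpath s t) :=
  hγ.comp (injective_convexComb hst)

theorem injOn_path_trans {γ : Path a b} {η : Path b c} (hγ : Function.Injective γ)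
    (hη : Function.Injective η) (h : range γ ∩ range η ⊆ {b, c}) :
    InjOn (γ.trans η) {1}ᶜ := by
  have hmeet (s t : unitInterval) (hst : γ s = η t) (ht : (t : ℝ) ≠ 1) :
      (s : ℝ) = 1 ∧ (t : ℝ) = 0 := by
    rcases h ⟨mem_range_self s, t, hst.symm⟩ with hs | hs
    · exact ⟨congrArg Subtype.val (hγ (hs.trans γ.target.symm)),
        congrArg Subtype.val (hη ((hst.symm.trans hs).trans η.source.symm))⟩
    · exact absurd (congrArg Subtype.val (hη ((hst.symm.trans hs).trans η.target.symm))) ht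
  intro s hs t ht hst
  rw [mem_compl_singleton_iff, ← unitInterval.coe_ne_one] at hs ht
  rw [Path.trans_apply, Path.trans_apply] at hst
  have hs' : 2 * (s : ℝ) - 1 ≠ 1 := by contrapose! hs; linarith
  have ht' : 2 * (t : ℝ) - 1 ≠ 1 := by contrapose! ht; linarith
  refine Subtype.ext ?_
  split_ifs at hst
  · have : 2 * (s : ℝ) = 2 * t := congrArg Subtype.val (hγ hst)
    linarith
  · have : 2 * (s : ℝ) = 1 ∧ 2 * (t : ℝ) - 1 = 0 := hmeet _ _ hst ht'
    linarith
  · have : 2 * (t : ℝ) = 1 ∧ 2 * (s : ℝ) - 1 = 0 := hmeet _ _ hst.symm hs'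
    linarith
  · have : 2 * (s : ℝ) - 1 = 2 * t - 1 := congrArg Subtype.val (hη hst)
    linarith

theorem injective_path_trans {γ : Path a b} {η : Path b c} (hγ : Function.Injective γ)
    (hη : Function.Injective η) (h : range γ ∩ range η ⊆ {b}) :
    Function.Injective (γ.trans η) := by
  have hbc : b ≠ c := fun hbc =>
    zero_ne_one (hη ((η.source.trans hbc).trans η.target.symm))
  have huniv : (univ : Set unitInterval) = insert 1 {1}ᶜ := by simp [insert_eq]
  rw [← injOn_univ, huniv, injOn_insert (by simp)]
  refine ⟨injOn_path_trans hγ hη (h.trans (by simp)), ?_⟩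
  rintro ⟨t, ht, htc⟩
  rw [Path.target, Path.trans_apply] at htc
  split_ifs at htc with ht'
  · exact hbc (h ⟨⟨_, htc⟩, η.target_mem_range⟩).symm
  · have : 2 * (t : ℝ) - 1 = 1 := congrArg Subtype.val (hη (htc.trans η.target.symm))
    have ht1 : (t : ℝ) = 1 := by linarith
    exact ht (Subtype.ext ht1)

theorem eq_iff_of_injOn_loop {γ : Path a a} (hγ : InjOn γ {1}ᶜ) (s t : unitInterval) :
    γ s = γ t ↔ s = t ∨ s = 0 ∧ t = 1 ∨ s = 1 ∧ t = 0 := by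
  have h0 {t : unitInterval} (ht : t ≠ 1) : γ t = a ↔ t = 0 :=
    ⟨fun h => hγ ht (by simp) (h.trans γ.source.symm), fun h => h ▸ γ.source⟩
  rcases eq_or_ne s 1 with rfl | hs <;> rcases eq_or_ne t 1 with rfl | ht
  · simp
  · simp [eq_comm (a := a), h0 ht, ht, ht.symm]
  · simp [h0 hs, hs]
  · simp [hγ.eq_iff hs ht, hs, ht]

theorem exists_loop_unitAddCircle :
    ∃ γ : Path (0 : UnitAddCircle) 0, InjOn γ {1}ᶜ ∧ Function.Surjective γ := by
  let γ : Path (0 : UnitAddCircle) 0 :=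
    ⟨⟨fun t => ((t : ℝ) : UnitAddCircle), by fun_prop⟩, rfl, AddCircle.coe_period 1⟩
  refine ⟨γ, fun s hs t ht hst => Subtype.ext ?_, fun x => ?_⟩
  · have hIco {t : unitInterval} (ht : t ∈ ({1}ᶜ : Set unitInterval)) :
        (t : ℝ) ∈ Ico (0 : ℝ) (0 + 1) :=
      ⟨unitInterval.nonneg t, by simpa using unitInterval.lt_one_iff_ne_one.2 ht⟩
    exact (AddCircle.coe_eq_coe_iff_of_mem_Ico (hIco hs) (hIco ht)).1 hst
  · obtain ⟨t, ht, rfl⟩ := (AddCircle.coe_image_Icc_eq (1 : ℝ) 0).ge (mem_univ x)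
    exact ⟨⟨t, by simpa using ht⟩, rfl⟩

theorem isSimpleClosedCurve_range [T2Space Y] {γ : Path a a} (hγ : InjOn γ {1}ᶜ) :
    IsSimpleClosedCurve (range γ) := by
  obtain ⟨η, hη, hηsurj⟩ := exists_loop_unitAddCircle
  have hcont : Continuous (rangeFactorization γ) := γ.continuous.subtype_mk _
  obtain ⟨e, -⟩ := exists_homeomorph_of_isQuotientMap
    (.of_surjective_continuous rangeFactorization_surjective hcont)
    (.of_surjective_continuous hηsurj η.continuous) fun s t => by
      rw [eq_iff_of_injOn_loop hη, ← eq_iff_of_injOn_loop hγ,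
        rangeFactorization_eq_rangeFactorization_iff]
  exact ⟨e.trans (AddCircle.homeomorphCircle one_ne_zero)⟩

end Paths

theorem isArcFromTo_iff_exists_path [T2Space Y] {B : Set Y} {a b : Y} :
    IsArcFromTo B a b ↔ ∃ γ : Path a b, Function.Injective γ ∧ range γ = B := by
  constructor
  · rintro ⟨h, rfl, rfl⟩
    let γ : Path (h 0 : Y) (h 1) := ⟨⟨fun t => h t, by fun_prop⟩, rfl, rfl⟩
    exact ⟨γ, Subtype.val_injective.comp h.injective,
      (h.surjective.range_comp Subtype.val).trans Subtype.range_val⟩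
  · rintro ⟨γ, hγ, rfl⟩
    exact ⟨(γ.continuous.isClosedEmbedding hγ).isEmbedding.toHomeomorph, γ.source, γ.target⟩

theorem unitInterval_homeomorph_apply_zero (φ : unitInterval ≃ₜ unitInterval) : φ 0 = 0 ∨ φ 0 = 1 :=
  (φ.continuous.strictMono_of_inj_boundedOrder' φ.injective).imp
    (fun h => (h.orderIsoOfSurjective φ φ.surjective).map_bot)
    (fun h => (h.dual_right.orderIsoOfSurjective (OrderDual.toDual ∘ φ) φ.surjective).map_bot)

theorem IsArcSet.exists_isArcFromTo {B : Set Y} (hB : IsArcSet B) : ∃ a b, IsArcFromTo B a b :=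
  hB.elim fun e => ⟨_, _, e.symm, rfl, rfl⟩

theorem IsArcEndpoint.mem {B : Set Y} {a : Y} (ha : IsArcEndpoint B a) : a ∈ B := by
  obtain ⟨_, h, rfl, -⟩ := ha
  exact (h _).2

namespace IsArcFromTo

variable {B E : Set Y} {a b c : Y}

theorem isArcSet (hB : IsArcFromTo B a b) : IsArcSet B :=
  hB.elim fun h _ => ⟨h.symm⟩

theorem eq_or_eq_of_isArcEndpoint (hB : IsArcFromTo B a b) {x : Y} (hx : IsArcEndpoint B x) :
    x = a ∨ x = b := by
  obtain ⟨h, rfl, rfl⟩ := hB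
  obtain ⟨_, k, rfl, -⟩ := hx
  exact (unitInterval_homeomorph_apply_zero (k.trans h.symm)).imp
    (fun h0 => congrArg Subtype.val (h.symm_apply_eq.1 h0))
    (fun h1 => congrArg Subtype.val (h.symm_apply_eq.1 h1))

variable [T2Space Y]

theorem symm (hB : IsArcFromTo B a b) : IsArcFromTo B b a := by
  obtain ⟨γ, hγ, rfl⟩ := isArcFromTo_iff_exists_path.1 hB
  exact isArcFromTo_iff_exists_path.2
    ⟨γ.symm, hγ.comp unitInterval.symm_bijective.injective, γ.symm_range⟩

theorem union (hB : IsArcFromTo B a b) (hE : IsArcFromTo E b c) (hBE : B ∩ E ⊆ {b}) :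
    IsArcFromTo (B ∪ E) a c := by
  obtain ⟨γ, hγ, rfl⟩ := isArcFromTo_iff_exists_path.1 hB
  obtain ⟨η, hη, rfl⟩ := isArcFromTo_iff_exists_path.1 hE
  exact isArcFromTo_iff_exists_path.2 ⟨γ.trans η, injective_path_trans hγ hη hBE, γ.trans_range η⟩

theorem isSimpleClosedCurve_union (hB : IsArcFromTo B a b) (hE : IsArcFromTo E a b)
    (hBE : B ∩ E ⊆ {a, b}) : IsSimpleClosedCurve (B ∪ E) := by
  obtain ⟨γ, hγ, rfl⟩ := isArcFromTo_iff_exists_path.1 hB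
  obtain ⟨η, hη, rfl⟩ := isArcFromTo_iff_exists_path.1 hE.symm
  rw [← γ.trans_range η]
  exact isSimpleClosedCurve_range (injOn_path_trans hγ hη (hBE.trans (pair_comm a b).subset))

theorem exists_subset (hB : IsArcFromTo B a b) {x y : Y} (hx : x ∈ B) (hy : y ∈ B)
    (hxy : x ≠ y) : ∃ S ⊆ B, IsArcFromTo S x y := by
  obtain ⟨γ, hγ, rfl⟩ := isArcFromTo_iff_exists_path.1 hB
  obtain ⟨s, rfl⟩ := hx
  obtain ⟨t, rfl⟩ := hy
  refine ⟨range (γ.subpath s t), ?_, isArcFromTo_iff_exists_path.2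
    ⟨γ.subpath s t, injective_path_subpath hγ (ne_of_apply_ne γ hxy), rfl⟩⟩
  rw [Path.range_subpath]
  exact image_subset_range _ _

end IsArcFromTo

namespace IsArcSet

variable {B : Set Y}

theorem isCompact (hB : IsArcSet B) : IsCompact B :=
  hB.elim fun e => isCompact_iff_compactSpace.2 e.symm.compactSpace

theorem isConnected (hB : IsArcSet B) : IsConnected B :=
  hB.elim fun e =>
    isConnected_iff_connectedSpace.2 (e.symm.surjective.connectedSpace e.symm.continuous)

end IsArcSet

end Arcs

section Whiskers

/-- The arcs `α i`, parametrized by the unit interval, are attached at their initial points to the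
continuum `A`, and are otherwise disjoint from `A` and from each other. Such families parametrize
cubes in the hyperspace of subcontinua containing a point of `A`. -/
structure IsWhiskered {Y ι : Type*} [TopologicalSpace Y] (A : Set Y) (α : ι → unitInterval → Y) :
    Prop where
  isCompact : IsCompact A
  isConnected : IsConnected A
  continuous (i : ι) : Continuous (α i)
  mem_iff {i : ι} {t : unitInterval} : α i t ∈ A ↔ t = 0
  eq_and_eq {i j : ι} {s t : unitInterval} (hs : s ≠ 0) (hst : α i s = α j t) : i = j ∧ s = t

/-- The union of `A` with the initial subarcs of the whiskers `α i` up to the parameters `s i`. -/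
def whiskerSet {Y ι : Type*} (A : Set Y) (α : ι → unitInterval → Y) (s : ι → unitInterval) :
    Set Y :=
  A ∪ ⋃ i, α i '' Iic (s i)

theorem CP.set_injective {Y : Type u} [MetricSpace Y] {q : Y} :
    Function.Injective (CP.set : CP Y q → Set Y) :=
  fun _ _ h => Subtype.ext (NonemptyCompacts.ext h)

theorem CP.isEmbedding_val {Y : Type u} [MetricSpace Y] {q : Y} :
    IsEmbedding fun K : CP Y q => K.1 :=
  IsEmbedding.subtypeVal (p := fun K : NonemptyCompacts Y =>
    IsConnected (K : Set Y) ∧ q ∈ (K : Set Y))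

theorem CP.isOpen_setOf_set_subset {Y : Type u} [MetricSpace Y] {q : Y} {U : Set Y}
    (hU : IsOpen U) : IsOpen {K : CP Y q | K.set ⊆ U} :=
  (NonemptyCompacts.isOpen_subsets_of_isOpen hU).preimage CP.isEmbedding_val.continuous

namespace IsWhiskered

section Topological

variable {Y ι : Type*} [TopologicalSpace Y] {A : Set Y} {α : ι → unitInterval → Y}

theorem apply_mem_whiskerSet_iff (h : IsWhiskered A α) {s : ι → unitInterval} {i : ι}
    {t : unitInterval} : α i t ∈ whiskerSet A α s ↔ t ≤ s i := by
  refine ⟨?_, fun ht => Or.inr (mem_iUnion_of_mem i (mem_image_of_mem _ ht))⟩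
  rintro (ht | ht)
  · exact (h.mem_iff.1 ht).trans_le unitInterval.nonneg'
  · obtain ⟨j, u, hu, hut⟩ := mem_iUnion.1 ht
    rcases eq_or_ne t 0 with rfl | ht0
    · exact unitInterval.nonneg'
    · obtain ⟨rfl, rfl⟩ := h.eq_and_eq ht0 hut.symm
      exact hu

theorem injective_whiskerSet (h : IsWhiskered A α) : Function.Injective (whiskerSet A α) :=
  fun _ _ hst => funext fun i => eq_of_forall_le_iff fun _ => by
    rw [← h.apply_mem_whiskerSet_iff, hst, h.apply_mem_whiskerSet_iff]

theorem isCompact_whiskerSet [Finite ι] (h : IsWhiskered A α) (s : ι → unitInterval) :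
    IsCompact (whiskerSet A α s) :=
  h.isCompact.union (isCompact_iUnion fun i => isClosed_Iic.isCompact.image (h.continuous i))

theorem isConnected_whiskerSet (h : IsWhiskered A α) (s : ι → unitInterval) :
    IsConnected (whiskerSet A α s) := by
  obtain ⟨q, hq⟩ := h.isConnected.nonempty
  have hA := h.isConnected.isPreconnected
  refine ⟨⟨q, Or.inl hq⟩, isPreconnected_of_forall q ?_⟩
  rintro y (hy | hy)
  · exact ⟨A, subset_union_left, hq, hy, hA⟩
  · obtain ⟨i, hi⟩ := mem_iUnion.1 hy
    have hleg : IsPreconnected (α i '' Iic (s i)) :=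
      ordConnected_Iic.isPreconnected.image _ (h.continuous i).continuousOn
    exact ⟨A ∪ α i '' Iic (s i), union_subset_union_right _ (subset_iUnion_of_subset i subset_rfl),
      Or.inl hq, Or.inr hi, hA.union (α i 0) (h.mem_iff.2 rfl)
        (mem_image_of_mem _ unitInterval.nonneg') hleg⟩

variable {q : Y} {α : ι → unitInterval → Y}

theorem apply_zero (h : IsWhiskered {q} α) (i : ι) : α i 0 = q :=
  h.mem_iff.2 rfl

variable [T2Space Y] [Finite ι]

/-- If `α i u ∉ K` then `K` is separated by the terminal subarc of `α i` from `α i u` on and by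
everything else. -/
theorem Iic_subset_preimage (h : IsWhiskered {q} α) {K : Set Y} (hK : IsPreconnected K)
    (hq : q ∈ K) (hKα : K ⊆ ⋃ i, range (α i)) {i : ι} {t : unitInterval} (ht : α i t ∈ K) :
    Iic t ⊆ α i ⁻¹' K := by
  classical
  intro u hut
  let s : ι → unitInterval := Function.update (fun _ => 1) i u
  have hcover : K ⊆ α i '' Ici u ∪ whiskerSet {q} α s := by
    intro x hx
    obtain ⟨j, v, rfl⟩ := mem_iUnion.1 (hKα hx)
    rw [mem_union, h.apply_mem_whiskerSet_iff]
    rcases eq_or_ne j i with rfl | hj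
    · exact (le_total u v).imp (mem_image_of_mem _) (by simp [s])
    · exact Or.inr (by simpa [s, hj] using unitInterval.le_one')
  obtain ⟨x, hxK, ⟨v, huv, rfl⟩, hv⟩ := isPreconnected_closed_iff.1 hK _ _
    (isClosed_Ici.isCompact.image (h.continuous i)).isClosed
    (h.isCompact_whiskerSet s).isClosed hcover ⟨_, ht, mem_image_of_mem _ hut⟩ ⟨q, hq, Or.inl rfl⟩
  rw [h.apply_mem_whiskerSet_iff] at hv
  replace hv : v ≤ u := by simpa [s] using hv
  exact le_antisymm hv huv ▸ hxK

theorem exists_whiskerSet_eq (h : IsWhiskered {q} α) {K : Set Y} (hK : IsClosed K)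
    (hKc : IsPreconnected K) (hq : q ∈ K) (hKα : K ⊆ ⋃ i, range (α i)) :
    ∃ s, whiskerSet {q} α s = K := by
  have hmax (i : ι) : sSup (α i ⁻¹' K) ∈ α i ⁻¹' K :=
    (hK.preimage (h.continuous i)).sSup_mem
      ⟨0, by rwa [mem_preimage, h.apply_zero]⟩
  refine ⟨fun i => sSup (α i ⁻¹' K), Subset.antisymm ?_ fun x hx => ?_⟩
  · refine union_subset (singleton_subset_iff.2 hq) (iUnion_subset fun i => image_subset_iff.2 ?_)
    exact h.Iic_subset_preimage hKc hq hKα (hmax i)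
  · obtain ⟨i, t, rfl⟩ := mem_iUnion.1 (hKα hx)
    exact h.apply_mem_whiskerSet_iff.2 (le_sSup hx)

end Topological

variable {Y : Type u} [MetricSpace Y] {q : Y} {ι : Type*} {A : Set Y} {α : ι → unitInterval → Y}

section Finite

variable [Finite ι]

/-- The map from a cube to the hyperspace `C(q,Y)` given by a family of whiskers. -/
def toCP (h : IsWhiskered A α) (hq : q ∈ A) (s : ι → unitInterval) : CP Y q :=
  ⟨⟨⟨whiskerSet A α s, h.isCompact_whiskerSet s⟩, (h.isConnected_whiskerSet s).nonempty⟩,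
    h.isConnected_whiskerSet s, Or.inl hq⟩

theorem injective_toCP (h : IsWhiskered A α) (hq : q ∈ A) : Function.Injective (h.toCP hq) :=
  Function.Injective.of_comp (f := CP.set) h.injective_whiskerSet

theorem continuous_toCP (h : IsWhiskered A α) (hq : q ∈ A) : Continuous (h.toCP hq) := by
  cases nonempty_fintype ι
  have hcont (i : ι) : Continuous (α i) := h.continuous i
  have heq (s : ι → unitInterval) : (h.toCP hq s).1.toCompacts = (⟨A, h.isCompact⟩ : Compacts Y) ⊔
      Finset.univ.sup fun i => (⊤ : Compacts unitInterval).map (fun u => α i (min u (s i)))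
        (by fun_prop) := by
    have hIic (a : unitInterval) : range (fun u => min u a) = Iic a :=
      Subset.antisymm (range_subset_iff.2 fun u => min_le_right u a)
        fun u hu => ⟨u, min_eq_left hu⟩
    refine Compacts.ext ?_
    simp only [Compacts.coe_sup, Compacts.coe_finset_sup, Compacts.coe_map, Compacts.coe_top,
      Compacts.coe_mk, Finset.sup_set_eq_biUnion, image_univ, Finset.mem_univ, iUnion_true]
    change A ∪ ⋃ i, α i '' Iic (s i) = _
    simp only [← hIic, ← range_comp, Function.comp_def]
  rw [CP.isEmbedding_val.continuous_iff, NonemptyCompacts.isEmbedding_toCompacts.continuous_iff]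
  refine Continuous.congr ?_ fun s => (heq s).symm
  refine continuous_const.sup (Continuous.finset_sup_apply fun i _ => ?_)
  exact continuous_const.compacts_map' (by fun_prop)

theorem exists_toCP_eq (h : IsWhiskered {q} α) {K : CP Y q} (hK : K.set ⊆ ⋃ i, range (α i)) :
    ∃ s, h.toCP rfl s = K := by
  obtain ⟨s, hs⟩ :=
    h.exists_whiskerSet_eq K.1.isCompact.isClosed K.2.1.isPreconnected K.2.2 hK
  exact ⟨s, CP.set_injective hs⟩

theorem nonempty_homeomorph_cube (h : IsWhiskered {q} α) (hα : ⋃ i, range (α i) = univ) :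
    Nonempty ((ι → unitInterval) ≃ₜ CP Y q) :=
  ⟨(isHomeomorph_iff_continuous_bijective.2 ⟨h.continuous_toCP rfl, h.injective_toCP rfl,
    fun _ => h.exists_toCP_eq (hα ▸ subset_univ _)⟩).homeomorph⟩

end Finite

variable [Fintype ι] {n : ℕ}

theorem card_le (h : IsWhiskered A α) (hq : q ∈ A) (hn : n ≤ 2)
    (e : (Fin n → unitInterval) ≃ₜ CP Y q) : Fintype.card ι ≤ n := by
  have := card_le_card_of_injective_cube (by simpa using hn)
    (e.symm.continuous.comp (h.continuous_toCP hq)) (e.symm.injective.comp (h.injective_toCP hq))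
  simpa using this

theorem le_card (h : IsWhiskered {q} α) (hα : (⋃ i, range (α i)) ∈ 𝓝 q) (hι : Fintype.card ι ≤ 2)
    (e : (Fin n → unitInterval) ≃ₜ CP Y q) : n ≤ Fintype.card ι := by
  have hW : IsOpen (e ⁻¹' {K | K.set ⊆ interior (⋃ i, range (α i))}) :=
    (CP.isOpen_setOf_set_subset isOpen_interior).preimage e.continuous
  obtain ⟨g, hg, hginj, hgW⟩ := exists_injective_forall_mem_of_isOpen_cube hW
    (e.surjective.nonempty_preimage.2 ⟨⟨{q}, isConnected_singleton, mem_singleton q⟩,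
      singleton_subset_iff.2 (mem_interior_iff_mem_nhds.2 hα)⟩)
  have hemb : IsEmbedding (h.toCP rfl) :=
    ((h.continuous_toCP rfl).isClosedEmbedding (h.injective_toCP rfl)).isEmbedding
  let k (y : Fin n → unitInterval) : range (h.toCP rfl) :=
    ⟨e (g y), h.exists_toCP_eq ((hgW y).trans interior_subset)⟩
  have hk : Continuous k := by fun_prop
  have hkinj : Function.Injective k := fun y z hyz =>
    hginj (e.injective (congrArg Subtype.val hyz))
  have := card_le_card_of_injective_cube hι (hemb.toHomeomorph.symm.continuous.comp hk)
    (hemb.toHomeomorph.symm.injective.comp hkinj)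
  simpa using this

end IsWhiskered

end Whiskers

section SimpleNods

theorem convexComb_eq_left_iff {x y t : unitInterval} (hxy : x ≠ y) :
    Icc.convexComb x y t = x ↔ t = 0 :=
  (injective_convexComb hxy).eq_iff' (by simp)

theorem le_convexComb_one (x t : unitInterval) : x ≤ Icc.convexComb x 1 t := by
  have h : Icc.convexComb x 1 t ∈ uIcc x 1 := Path.range_subpathAux x 1 ▸ mem_range_self t
  rw [uIcc_of_le unitInterval.le_one'] at h
  exact h.1

namespace IsWhiskered

variable {Y : Type u} [TopologicalSpace Y] {ι : Type*} {A : Set Y} {α : ι → unitInterval → Y}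
  {q : Y}

theorem injective_apply (h : IsWhiskered A α) (i : ι) : Function.Injective (α i) := by
  intro s t hst
  rcases eq_or_ne s 0 with rfl | hs
  · exact (h.mem_iff.1 (hst ▸ h.mem_iff.2 rfl)).symm
  · exact (h.eq_and_eq hs hst).2

theorem apply_eq_apply_iff (h : IsWhiskered {q} α) {i j : ι} {s t : unitInterval} :
    α i s = α j t ↔ s = 0 ∧ t = 0 ∨ i = j ∧ s = t := by
  refine ⟨fun hst => ?_, ?_⟩
  · rcases eq_or_ne s 0 with rfl | hs
    · exact Or.inl ⟨rfl, h.mem_iff.1 (hst ▸ h.apply_zero i)⟩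
    · exact Or.inr (h.eq_and_eq hs hst)
  · rintro (⟨rfl, rfl⟩ | ⟨rfl, rfl⟩)
    · rw [h.apply_zero, h.apply_zero]
    · rfl

theorem range_inter_range_subset (h : IsWhiskered {q} α) {i j : ι} (hij : i ≠ j) :
    range (α i) ∩ range (α j) ⊆ {q} := by
  rintro _ ⟨⟨s, rfl⟩, t, ht⟩
  rcases h.apply_eq_apply_iff.1 ht with ⟨-, rfl⟩ | ⟨rfl, -⟩
  · exact h.apply_zero i
  · exact absurd rfl hij

theorem convexComb (h : IsWhiskered A α) [Finite ι] {m : ι → unitInterval} (hm : ∀ i, m i ≠ 1) :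
    IsWhiskered (whiskerSet A α m) fun i t => α i (Icc.convexComb (m i) 1 t) where
  isCompact := h.isCompact_whiskerSet m
  isConnected := h.isConnected_whiskerSet m
  continuous i := (h.continuous i).comp (by fun_prop)
  mem_iff {i t} := by
    rw [h.apply_mem_whiskerSet_iff, (le_convexComb_one (m i) t).ge_iff_eq',
      convexComb_eq_left_iff (hm i)]
  eq_and_eq {i j s t} hs hst := by
    have h0 : Icc.convexComb (m i) 1 s ≠ 0 := fun h0 =>
      hs ((convexComb_eq_left_iff (hm i)).1 (le_antisymm (h0.trans_le unitInterval.nonneg')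
        (le_convexComb_one (m i) s)))
    obtain ⟨rfl, hst'⟩ := h.eq_and_eq h0 hst
    exact ⟨rfl, injective_convexComb (hm i) hst'⟩

theorem option_elim (h : IsWhiskered A α) {η : unitInterval → Y} (hη : Continuous η)
    (hinj : Function.Injective η) (hmem : ∀ t, η t ∈ A ↔ t = 0)
    (hdisj : ∀ t ≠ 0, ∀ i, η t ∉ range (α i)) :
    IsWhiskered A fun o : Option ι => o.elim η α where
  isCompact := h.isCompact
  isConnected := h.isConnected
  continuous := by
    rintro (_ | i)
    exacts [hη, h.continuous i]
  mem_iff := by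
    rintro (_ | i) t
    exacts [hmem t, h.mem_iff]
  eq_and_eq := by
    rintro (_ | i) (_ | j) s t hs hst
    · exact ⟨rfl, hinj hst⟩
    · exact absurd ⟨t, hst.symm⟩ (hdisj s hs j)
    · have ht : t ≠ 0 := fun ht =>
        hs (h.mem_iff.1 (mem_of_eq_of_mem hst ((hmem t).2 ht)))
      exact absurd ⟨s, hst⟩ (hdisj t ht i)
    · exact (h.eq_and_eq hs hst).imp_left (congrArg some)

variable [T2Space Y]

theorem isArcFromTo (h : IsWhiskered {q} α) (i : ι) : IsArcFromTo (range (α i)) q (α i 1) :=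
  isArcFromTo_iff_exists_path.2
    ⟨⟨⟨α i, h.continuous i⟩, h.apply_zero i, rfl⟩, h.injective_apply i, rfl⟩

theorem isArcFromTo_union (h : IsWhiskered {q} α) {i j : ι} (hij : i ≠ j) :
    IsArcFromTo (range (α i) ∪ range (α j)) (α i 1) (α j 1) :=
  (h.isArcFromTo i).symm.union (h.isArcFromTo j) (h.range_inter_range_subset hij)

theorem isArcEndpoint_iUnion {n : ℕ} {α : Fin n → unitInterval → Y} (h : IsWhiskered {q} α)
    (hn : n ≤ 2) (i : Fin n) : IsArcEndpoint (⋃ j, range (α j)) (α i 1) := by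
  interval_cases n
  · exact i.elim0
  · have hunion : ⋃ j, range (α j) = range (α i) :=
      (iUnion_congr fun j => by rw [Subsingleton.elim j i]).trans (iUnion_const _)
    exact ⟨q, hunion ▸ (h.isArcFromTo i).symm⟩
  · have hunion : ⋃ j, range (α j) = range (α 0) ∪ range (α 1) := by
      ext; simp [Fin.exists_fin_two]
    have harc := h.isArcFromTo_union zero_ne_one
    rw [hunion]
    fin_cases i
    exacts [⟨_, harc⟩, ⟨_, harc.symm⟩]

end IsWhiskered

theorem isSimpleNod_iff_exists_isWhiskered {Y : Type u} [TopologicalSpace Y] [T2Space Y] {n : ℕ}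
    {N : Set Y} {v : Y} : IsSimpleNod n N v ↔
      0 < n ∧ ∃ α : Fin n → unitInterval → Y, IsWhiskered {v} α ∧ ⋃ i, range (α i) = N := by
  refine and_congr_right fun _ => ⟨?_, ?_⟩
  · rintro ⟨A, -, rfl, hv, hdisj⟩
    choose b hb using hv
    choose γ hγ hγA using fun i => isArcFromTo_iff_exists_path.1 (hb i)
    refine ⟨fun i => γ i, ⟨isCompact_singleton, isConnected_singleton, fun i => (γ i).continuous,
      fun {i t} => ?_, fun {i j s t} hs hst => ?_⟩, iUnion_congr hγA⟩
    · exact ⟨fun ht => hγ i (ht.trans (γ i).source.symm), fun ht => ht ▸ (γ i).source⟩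
    · have hij : i = j := by
        by_contra hij
        have hmem : γ i s ∈ A i ∩ A j := by
          rw [← hγA, ← hγA]
          exact ⟨mem_range_self s, t, hst.symm⟩
        rw [hdisj i j hij] at hmem
        exact hs (hγ i (hmem.trans (γ i).source.symm))
      subst hij
      exact ⟨rfl, hγ i hst⟩
  · rintro ⟨α, h, rfl⟩
    refine ⟨fun i => range (α i), fun i => (h.isArcFromTo i).isArcSet, rfl,
      fun i => ⟨_, h.isArcFromTo i⟩, fun i j hij => ?_⟩
    exact (h.range_inter_range_subset hij).antisymm
      (singleton_subset_iff.2 ⟨⟨0, h.apply_zero i⟩, 0, h.apply_zero j⟩)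

theorem IsSimpleNod.exists_homeomorph {X Y : Type u} [TopologicalSpace X] [T2Space X]
    [TopologicalSpace Y] [T2Space Y] {n : ℕ} {p : X} {q : Y} (hp : IsSimpleNod n univ p)
    (hq : IsSimpleNod n univ q) : ∃ e : X ≃ₜ Y, e p = q := by
  obtain ⟨hn, α, hα, hαX⟩ := isSimpleNod_iff_exists_isWhiskered.1 hp
  obtain ⟨-, β, hβ, hβY⟩ := isSimpleNod_iff_exists_isWhiskered.1 hq
  have hsurj {Z : Type u} {δ : Fin n → unitInterval → Z} (hδ : ⋃ i, range (δ i) = univ) :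
      Function.Surjective fun z : Fin n × unitInterval => δ z.1 z.2 := fun x => by
    obtain ⟨i, t, ht⟩ := mem_iUnion.1 (hδ.ge (mem_univ x))
    exact ⟨(i, t), ht⟩
  obtain ⟨e, he⟩ := exists_homeomorph_of_isQuotientMap
    (f := fun z : Fin n × unitInterval => α z.1 z.2) (g := fun z => β z.1 z.2)
    (.of_surjective_continuous (hsurj hαX) (continuous_prod_of_discrete_left.2 hα.continuous))
    (.of_surjective_continuous (hsurj hβY) (continuous_prod_of_discrete_left.2 hβ.continuous))
    fun z w => by rw [hα.apply_eq_apply_iff, hβ.apply_eq_apply_iff]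
  exact ⟨e, by simpa only [hα.apply_zero, hβ.apply_zero] using he (⟨0, hn⟩, 0)⟩

theorem IsSimpleNod.nonempty_homeomorph_cube {Y : Type u} [MetricSpace Y] {n : ℕ} {v : Y}
    (hv : IsSimpleNod n univ v) : Nonempty ((Fin n → unitInterval) ≃ₜ CP Y v) := by
  obtain ⟨-, α, hα, hαY⟩ := isSimpleNod_iff_exists_isWhiskered.1 hv
  exact hα.nonempty_homeomorph_cube hαY

theorem isSimpleNod_one_iff {Y : Type u} [TopologicalSpace Y] {B : Set Y} {v : Y} :
    IsSimpleNod 1 B v ↔ IsArcEndpoint B v := by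
  refine ⟨?_, fun hB => ⟨one_pos, fun _ => B, fun _ => hB.elim fun _ h => h.isArcSet,
    iUnion_const B, fun _ => hB, fun i j hij => absurd (Subsingleton.elim i j) hij⟩⟩
  rintro ⟨-, A, -, rfl, hA, -⟩
  have hunion : ⋃ i, A i = A 0 :=
    (iUnion_congr fun i => by rw [Subsingleton.elim i 0]).trans (iUnion_const _)
  exact hunion ▸ hA 0

theorem isSimpleNod_two {Y : Type u} [TopologicalSpace Y] {B E : Set Y} {v : Y}
    (hB : IsArcEndpoint B v) (hE : IsArcEndpoint E v) (hBE : B ∩ E = {v}) :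
    IsSimpleNod 2 (B ∪ E) v := by
  have harc {A : Set Y} (hA : IsArcEndpoint A v) : IsArcSet A := hA.elim fun _ h => h.isArcSet
  refine ⟨two_pos, ![B, E], ?_, ?_, ?_, ?_⟩
  · exact Fin.forall_fin_two.2 ⟨harc hB, harc hE⟩
  · ext; simp [Fin.exists_fin_two]
  · exact Fin.forall_fin_two.2 ⟨hB, hE⟩
  · simp [Fin.forall_fin_two, hBE, inter_comm E B]

theorem IsArcSet.exists_isSimpleNod {Y : Type u} [TopologicalSpace Y] [T2Space Y] {B : Set Y}
    (hB : IsArcSet B) {q : Y} (hq : q ∈ B) : ∃ n ≤ 2, IsSimpleNod n B q := by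
  by_cases hend : IsArcEndpoint B q
  · exact ⟨1, one_le_two, isSimpleNod_one_iff.2 hend⟩
  obtain ⟨a, b, hab⟩ := hB.exists_isArcFromTo
  obtain ⟨γ, hγ, rfl⟩ := isArcFromTo_iff_exists_path.1 hab
  obtain ⟨t, rfl⟩ := hq
  have hsub {s : unitInterval} (hts : t ≠ s) : IsArcEndpoint (γ '' uIcc t s) (γ t) :=
    ⟨γ s, isArcFromTo_iff_exists_path.2
      ⟨γ.subpath t s, injective_path_subpath hγ hts, γ.range_subpath t s⟩⟩
  have h0 : t ≠ 0 := fun ht => hend ⟨b, by rwa [ht, γ.source]⟩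
  have h1 : t ≠ 1 := fun ht => hend ⟨a, by rw [ht, γ.target]; exact hab.symm⟩
  have hinter : γ '' uIcc t 0 ∩ γ '' uIcc t 1 = {γ t} := by
    rw [← image_inter hγ, uIcc_of_ge unitInterval.nonneg', uIcc_of_le unitInterval.le_one',
      Icc_inter_Icc_eq_singleton unitInterval.nonneg' unitInterval.le_one', image_singleton]
  have hunion : γ '' uIcc t 0 ∪ γ '' uIcc t 1 = range γ := by
    rw [← image_union, uIcc_of_ge unitInterval.nonneg', uIcc_of_le unitInterval.le_one',
      Icc_union_Icc_eq_Icc unitInterval.nonneg' unitInterval.le_one', ← image_univ]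
    exact congrArg (γ '' ·) Icc_bot_top
  exact ⟨2, le_rfl, hunion ▸ isSimpleNod_two (hsub h0) (hsub h1) hinter⟩

end SimpleNods

section Trees

/-- An arc attached to the union of the whiskers at a point which is not the tip of a whisker
yields a family with one whisker more, at the initial subarc of a whisker up to that point. -/
theorem IsWhiskered.succ_card_le {Y : Type u} [MetricSpace Y] {ι : Type*} [Fintype ι] {q x c : Y}
    {α : ι → unitInterval → Y} {E : Set Y} {n : ℕ} (h : IsWhiskered {q} α) (hn : n ≤ 2)
    (e : (Fin n → unitInterval) ≃ₜ CP Y q) (hx : x ∈ ⋃ i, range (α i)) (htip : ∀ i, x ≠ α i 1)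
    (hE : IsArcFromTo E x c) (hEα : E ∩ ⋃ i, range (α i) ⊆ {x}) : Fintype.card ι + 1 ≤ n := by
  classical
  obtain ⟨η, hη, rfl⟩ := isArcFromTo_iff_exists_path.1 hE
  obtain ⟨i, m, rfl⟩ := mem_iUnion.1 hx
  let s : ι → unitInterval := Function.update (fun _ => 0) i m
  have hs (j : ι) : s j ≠ 1 := by
    rcases eq_or_ne j i with rfl | hj
    · simpa [s] using ne_of_apply_ne (α j) (htip j)
    · simp [s, hj]
  have hη0 {t : unitInterval} (ht : η t ∈ ⋃ i, range (α i)) : t = 0 :=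
    hη ((hEα ⟨mem_range_self t, ht⟩).trans η.source.symm)
  have hsub : whiskerSet {q} α s ⊆ ⋃ i, range (α i) :=
    union_subset (singleton_subset_iff.2 (mem_iUnion_of_mem i ⟨0, h.apply_zero i⟩))
      (iUnion_mono fun j => image_subset_range _ _)
  have hwhisk := (h.convexComb hs).option_elim η.continuous hη
    (fun t => ⟨fun ht => hη0 (hsub ht), fun ht => by
      rw [ht, η.source, h.apply_mem_whiskerSet_iff]; simp [s]⟩)
    fun t ht j htj => ht (hη0 (mem_iUnion_of_mem j (range_comp_subset_range _ _ htj)))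
  simpa using hwhisk.card_le (Or.inl rfl) hn e

/-- The arc `B` and the finitely many arcs of the family `𝓔` cover the space, and each arc of `𝓔`
meeting `B` does so only in one of its end points, which is interior to `B`. This is how a maximal
arc among the unions of arcs of a tree sits in the tree. -/
structure IsTrunk {Y : Type u} [TopologicalSpace Y] (B : Set Y) (𝓔 : Set (Set Y)) : Prop where
  isArcSet : IsArcSet B
  finite : 𝓔.Finite
  isArcSet_of_mem {E : Set Y} (hE : E ∈ 𝓔) : IsArcSet E
  union_eq : B ∪ ⋃₀ 𝓔 = univ
  isArcEndpoint {E : Set Y} (hE : E ∈ 𝓔) {x : Y} (hx : x ∈ E ∩ B) : IsArcEndpoint E x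
  inter_subset {E : Set Y} (hE : E ∈ 𝓔) {x : Y} (hx : x ∈ E ∩ B) : E ∩ B ⊆ {x}
  mem_arcInterior {E : Set Y} (hE : E ∈ 𝓔) {x : Y} (hx : x ∈ E ∩ B) : x ∈ arcInterior B

namespace IsTrunk

variable {Y : Type u} [TopologicalSpace Y] [T2Space Y] {B : Set Y} {𝓔 : Set (Set Y)}

theorem isClosed_sUnion (h : IsTrunk B 𝓔) : IsClosed (⋃₀ 𝓔) :=
  sUnion_eq_biUnion ▸ h.finite.isClosed_biUnion fun _ hE =>
    (h.isArcSet_of_mem hE).isCompact.isClosed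

theorem mem_nhds_of_isArcEndpoint (h : IsTrunk B 𝓔) {x : Y} (hx : IsArcEndpoint B x) :
    B ∈ 𝓝 x := by
  have hx𝓔 : x ∉ ⋃₀ 𝓔 := fun ⟨_, hE, hxE⟩ => (h.mem_arcInterior hE ⟨hxE, hx.mem⟩).2 hx
  filter_upwards [h.isClosed_sUnion.isOpen_compl.mem_nhds hx𝓔] with y hy
  exact (h.union_eq.ge (mem_univ y)).resolve_right hy

theorem eq_univ_or_exists_isArcFromTo [PreconnectedSpace Y] (h : IsTrunk B 𝓔) :
    B = univ ∨ ∃ E x c, x ∈ arcInterior B ∧ IsArcFromTo E x c ∧ E ∩ B ⊆ {x} := by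
  by_cases hdisj : Disjoint B (⋃₀ 𝓔)
  · have hcompl : Bᶜ = ⋃₀ 𝓔 := IsCompl.compl_eq ⟨hdisj, codisjoint_iff.2 h.union_eq⟩
    have hopen : IsOpen B := by
      rw [← isClosed_compl_iff, hcompl]
      exact h.isClosed_sUnion
    exact Or.inl (IsClopen.eq_univ ⟨h.isArcSet.isCompact.isClosed, hopen⟩
      h.isArcSet.isConnected.nonempty)
  · obtain ⟨x, hxB, E, hE, hxE⟩ := not_disjoint_iff.1 hdisj
    have hx : x ∈ E ∩ B := ⟨hxE, hxB⟩
    obtain ⟨c, hc⟩ := h.isArcEndpoint hE hx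
    exact Or.inr ⟨E, x, c, h.mem_arcInterior hE hx, hc, h.inter_subset hE hx⟩

end IsTrunk

namespace IsTree

variable {Y : Type u} [MetricSpace Y]

theorem inter_subset_singleton (hY : IsTree Y) {B E : Set Y} (hB : IsArcSet B)
    (hE : ∀ x ∈ E ∩ B, IsArcEndpoint E x) {x : Y} (hx : x ∈ E ∩ B) : E ∩ B ⊆ {x} := by
  intro y hy
  by_contra hyx
  obtain ⟨b, hxb⟩ := hE x hx
  obtain rfl : y = b := (hxb.eq_or_eq_of_isArcEndpoint (hE y hy)).resolve_left hyx
  obtain ⟨_, _, hab⟩ := hB.exists_isArcFromTo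
  obtain ⟨S, hSB, hS⟩ := hab.exists_subset hx.2 hy.2 (Ne.symm hyx)
  refine hY.2 _ (hxb.isSimpleClosedCurve_union hS fun z hz => ?_)
  exact hxb.eq_or_eq_of_isArcEndpoint (hE z ⟨hz.1, hSB hz.2⟩)

theorem exists_isTrunk (hY : IsTree Y) (q : Y) : ∃ B 𝓔, IsTrunk B 𝓔 ∧ q ∈ B := by
  classical
  obtain ⟨-, -, -, 𝒜, h𝒜, hcover, hend⟩ := hY.1
  let P (𝒮 : Finset (Set Y)) : Prop := 𝒮 ⊆ 𝒜 ∧ IsArcSet (⋃₀ (𝒮 : Set (Set Y))) ∧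
    q ∈ ⋃₀ (𝒮 : Set (Set Y))
  have hfin : {𝒮 | P 𝒮}.Finite := 𝒜.powerset.finite_toSet.subset fun 𝒮 h𝒮 => by simpa using h𝒮.1
  obtain ⟨A, hA, hqA⟩ := hcover.ge (mem_univ q)
  obtain ⟨𝒮, ⟨h𝒮, hB, hq⟩, hmax⟩ := hfin.exists_maximal ⟨{A}, by simpa [P] using ⟨hA, h𝒜 A hA, hqA⟩⟩
  set B := ⋃₀ (𝒮 : Set (Set Y))
  have hendpt {E : Set Y} (hE : E ∈ 𝒜 \ 𝒮) : ∀ x ∈ E ∩ B, IsArcEndpoint E x := by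
    rintro x ⟨hxE, A, hA, hxA⟩
    rw [Finset.mem_sdiff] at hE
    exact (hend E hE.1 A (h𝒮 hA) (fun h => hE.2 (h ▸ hA)) x ⟨hxE, hxA⟩).1
  have hmeet {E : Set Y} (hE : E ∈ 𝒜 \ 𝒮) {x : Y} (hx : x ∈ E ∩ B) : E ∩ B ⊆ {x} :=
    hY.inter_subset_singleton hB (hendpt hE) hx
  refine ⟨B, ↑(𝒜 \ 𝒮), ⟨hB, Finset.finite_toSet _, fun hE => h𝒜 _ (Finset.sdiff_subset hE), ?_,
    fun hE => hendpt hE _, hmeet, fun {E} hE x hx => ⟨hx.2, ?_⟩⟩, hq⟩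
  · rw [← sUnion_union, ← Finset.coe_union, Finset.union_sdiff_of_subset h𝒮, hcover]
  · rintro ⟨a, ha⟩
    obtain ⟨c, hc⟩ := hendpt hE x hx
    have harc := (hc.symm.union ha (hmeet hE hx)).isArcSet
    rw [← sUnion_insert, ← Finset.coe_insert] at harc
    rw [Finset.mem_coe, Finset.mem_sdiff] at hE
    have hsub := Finset.subset_insert E 𝒮
    have hle := hmax ⟨Finset.insert_subset hE.1 h𝒮, harc, sUnion_mono (mod_cast hsub) hq⟩ hsub
    exact hE.2 (hle (Finset.mem_insert_self E 𝒮))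

theorem isSimpleNod_of_homeomorph (hY : IsTree Y) {q : Y} {n : ℕ} (hn : n ≤ 2)
    (e : (Fin n → unitInterval) ≃ₜ CP Y q) : IsSimpleNod n univ q := by
  have : ConnectedSpace Y := hY.1.2.1
  obtain ⟨B, 𝓔, hB, hq⟩ := hY.exists_isTrunk q
  obtain ⟨m, hm, hBm⟩ := hB.isArcSet.exists_isSimpleNod hq
  obtain ⟨-, α, hα, hαB⟩ := isSimpleNod_iff_exists_isWhiskered.1 hBm
  have hnm (hBq : B ∈ 𝓝 q) : n ≤ m := by
    simpa using hα.le_card (hαB ▸ hBq) (by simpa using hm) e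
  rcases hB.eq_univ_or_exists_isArcFromTo with rfl | ⟨E, x, c, hx, hE, hEB⟩
  · have hmn : m ≤ n := by simpa using hα.card_le rfl hn e
    rwa [le_antisymm (hnm Filter.univ_mem) hmn]
  · have hbranch : m + 1 ≤ n := by
      subst hαB
      simpa using hα.succ_card_le hn e hx.1
        (fun i hi => hx.2 (hi ▸ hα.isArcEndpoint_iUnion hm i)) hE hEB
    obtain rfl : m = 1 := by have := hBm.1; lia
    have := hnm (hB.mem_nhds_of_isArcEndpoint (isSimpleNod_one_iff.1 hBm))
    lia

end IsTree

end Trees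

theorem statement8 {X : Type u} [MetricSpace X] (hX : IsTree X) (hXarc : IsArcSpace X)
    (p : X) : UniqueHyperspaceInTrees X p := by
  intro Y _ hY q ⟨e⟩
  have hXset : IsArcSet (univ : Set X) := hXarc.map (Homeomorph.Set.univ X).trans
  obtain ⟨n, hn, hp⟩ := hXset.exists_isSimpleNod (mem_univ p)
  obtain ⟨f⟩ := hp.nonempty_homeomorph_cube
  exact hp.exists_homeomorph (hY.isSimpleNod_of_homeomorph hn (f.trans e))
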